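/- Let I be an ideal of 𝕡, with I_f = {a ∈ I* : I(a) = l} and I_p = {a ∈ I* : 0 < I(a) < l}. Suppose m is divisible by 2I(j)+1 for every j ∈ I_p. Let D = {v ∈ ℤ_m^n : v_i = 0 for i ∈ I_f; for i ∈ I_p every coordinate of v_i is of the form j(2I(i)+1) mod m with 0 ≤ j ≤ m/(2I(i)+1) − 1; for i ∈ [s]∖I* the block v_i is arbitrary}. Then the I-balls {B_I(v) : v ∈ D} are pairwise disjoint and their union is ℤ_m^n, and |D| = Π_{i∈I_p} (m/(2I(i)+1))^{k_i} · m^{Σ_{i∈[s]∖I*} k_i}. -/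

import Mathlib

open scoped Classical

noncomputable section

/-- Lee weight of an element of `ZMod m`. -/
def leeWt (m : ℕ) (a : ZMod m) : ℕ := min a.val (m - a.val)

/-- Block Lee weight of the `i`-th block of `u`. -/
def blockWt (m s : ℕ) (π : Fin s → ℕ) (u : ∀ i : Fin s, Fin (π i) → ZMod m)
    (i : Fin s) : ℕ :=
  Finset.univ.sup fun t => leeWt m (u i t)

/-- The `(𝕡,π)`-weight of `u`. -/
def pomsetWt (m s : ℕ) (P : PartialOrder (Fin s)) (π : Fin s → ℕ)
    (u : ∀ i : Fin s, Fin (π i) → ZMod m) : ℕ :=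
  ∑ i : Fin s,
    if ∃ j, j ≠ i ∧ P.le i j ∧ 0 < blockWt m s π u j then m / 2
    else blockWt m s π u i

/-- The pomset block distance. -/
def pomsetDist (m s : ℕ) (P : PartialOrder (Fin s)) (π : Fin s → ℕ)
    (u v : ∀ i : Fin s, Fin (π i) → ZMod m) : ℕ :=
  pomsetWt m s P π (u - v)

/-- An ideal of the pomset `𝕡`, given by its count function `I : [s] → {0,…,⌊m/2⌋}`. -/
def IsIdeal (m s : ℕ) (P : PartialOrder (Fin s)) (I : Fin s → ℕ) : Prop :=
  (∀ a, I a ≤ m / 2) ∧ ∀ a b, 0 < I a → P.le b a → b ≠ a → I b = m / 2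

/-- An ideal has full count if every element of its root set has count `⌊m/2⌋`. -/
def FullCount (m : ℕ) {s : ℕ} (I : Fin s → ℕ) : Prop :=
  ∀ a, 0 < I a → I a = m / 2

/-- The cardinality `|I|` of an ideal. -/
def idealCard {s : ℕ} (I : Fin s → ℕ) : ℕ := ∑ a, I a

/-- The cardinality `|I*|` of the root set of an ideal. -/
def rootCard {s : ℕ} (I : Fin s → ℕ) : ℕ :=
  (Finset.univ.filter fun a => 0 < I a).card

/-- `Σ_{i ∈ I*} k_i`. -/
def rootSum {s : ℕ} (π I : Fin s → ℕ) : ℕ :=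
  ∑ a ∈ Finset.univ.filter (fun a => 0 < I a), π a

/-- The `I`-ball centered at `u`. -/
def ballI (m s : ℕ) (π : Fin s → ℕ) (I : Fin s → ℕ)
    (u : ∀ i : Fin s, Fin (π i) → ZMod m) :
    Set (∀ i : Fin s, Fin (π i) → ZMod m) :=
  {v | ∀ i, blockWt m s π (u - v) i ≤ I i}

/-- `𝒞` is `I`-perfect: the `I`-balls centered at codewords are pairwise
disjoint and cover the whole space. -/
def IPerfect (m s : ℕ) (π : Fin s → ℕ) (I : Fin s → ℕ)
    (C : Set (∀ i : Fin s, Fin (π i) → ZMod m)) : Prop :=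
  (C.Pairwise fun c c' => Disjoint (ballI m s π I c) (ballI m s π I c')) ∧
  (⋃ c ∈ C, ballI m s π I c) = Set.univ

/-- The `r`-ball centered at `u`. -/
def ballR (m s : ℕ) (P : PartialOrder (Fin s)) (π : Fin s → ℕ) (r : ℕ)
    (u : ∀ i : Fin s, Fin (π i) → ZMod m) :
    Set (∀ i : Fin s, Fin (π i) → ZMod m) :=
  {v | pomsetDist m s P π u v ≤ r}

/-- The standard dot product on `ℤ_m^n`. -/
def dotProd (m s : ℕ) (π : Fin s → ℕ)
    (c v : ∀ i : Fin s, Fin (π i) → ZMod m) : ZMod m :=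
  ∑ i, ∑ t, c i t * v i t

/-- The dual code `𝒞^⊥`. -/
def dualCode (m s : ℕ) (π : Fin s → ℕ)
    (C : Set (∀ i : Fin s, Fin (π i) → ZMod m)) :
    Set (∀ i : Fin s, Fin (π i) → ZMod m) :=
  {v | ∀ c ∈ C, dotProd m s π c v = 0}

/-- The dual pomset, encoded by the opposite partial order. -/
def dualOrder (s : ℕ) (P : PartialOrder (Fin s)) : PartialOrder (Fin s) where
  le a b := P.le b a
  lt a b := P.lt b a
  le_refl a := P.le_refl a
  le_trans a b c h1 h2 := P.le_trans _ _ _ h2 h1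
  lt_iff_le_not_ge a b := P.lt_iff_le_not_ge b a
  le_antisymm a b h1 h2 := (P.le_antisymm _ _ h1 h2).symm

/-- The minimum `(𝕡,π)`-distance of a code. -/
def minDist (m s : ℕ) (P : PartialOrder (Fin s)) (π : Fin s → ℕ)
    (C : Set (∀ i : Fin s, Fin (π i) → ZMod m)) : ℕ :=
  sInf {r | ∃ c ∈ C, ∃ c' ∈ C, c ≠ c' ∧ r = pomsetWt m s P π (c - c')}

/-- `𝒞` is an MDS `(𝕡,π)`-code: it attains the Singleton bound
`n − ⌈log_m K⌉ ≥ max { Σ_{i∈I*} k_i : I ideal, |I*| = ⌊(d−1)/⌊m/2⌋⌋ }`. -/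
def IsMDS (m s : ℕ) (P : PartialOrder (Fin s)) (π : Fin s → ℕ)
    (C : Set (∀ i : Fin s, Fin (π i) → ZMod m)) : Prop :=
  (∀ I, IsIdeal m s P I →
      rootCard I = (minDist m s P π C - 1) / (m / 2) →
      rootSum π I ≤ (∑ i, π i) - Nat.clog m (Nat.card ↥C)) ∧
  (∃ I, IsIdeal m s P I ∧
      rootCard I = (minDist m s P π C - 1) / (m / 2) ∧
      rootSum π I = (∑ i, π i) - Nat.clog m (Nat.card ↥C))

/-- The chain pomset on `[s]`: the usual total order on `Fin s`. -/
def chainOrder (s : ℕ) : PartialOrder (Fin s) := inferInstance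

/-!
A coordinate of weight bound `c` with `2c + 1 ∣ m` reduces modulo `2c + 1`: the Lee ball of radius
`c` in `ZMod m` is mapped bijectively onto `ZMod (2c + 1)`, so every element of `ZMod m` is within
`c` of exactly one element of the kernel, the multiples of `2c + 1`. For `c = m / 2` the Lee ball
is everything and `{0}` does the same. Since `I`-balls are products of coordinate Lee balls, a
product of such coordinate codes is `I`-perfect, and its cardinality is the product of theirs.
-/

section Multiples

variable {m d : ℕ}

theorem mem_zmultiples_natCast_iff_castHom_eq_zero (h : d ∣ m) (a : ZMod m) :
    a ∈ AddSubgroup.zmultiples (d : ZMod m) ↔ ZMod.castHom h (ZMod d) a = 0 := by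
  rw [AddSubgroup.mem_zmultiples_iff]
  constructor
  · rintro ⟨k, rfl⟩
    rw [map_zsmul, map_natCast, ZMod.natCast_self, smul_zero]
  · intro ha
    obtain ⟨z, rfl⟩ := ZMod.intCast_surjective a
    rw [map_intCast, ZMod.intCast_zmod_eq_zero_iff_dvd] at ha
    obtain ⟨k, rfl⟩ := ha
    exact ⟨k, by rw [zsmul_eq_mul, Int.cast_mul, Int.cast_natCast, mul_comm]⟩

variable [NeZero m]

theorem addOrderOf_natCast_of_dvd (h : d ∣ m) : addOrderOf (d : ZMod m) = m / d := by
  rw [ZMod.addOrderOf_coe d (NeZero.ne m), Nat.gcd_eq_right h]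

theorem mem_zmultiples_natCast_iff_exists_le (h : d ∣ m) (a : ZMod m) :
    a ∈ AddSubgroup.zmultiples (d : ZMod m) ↔ ∃ j ≤ m / d - 1, a = ((j * d : ℕ) : ZMod m) := by
  have hpos : 0 < m / d := Nat.div_pos (Nat.le_of_dvd (NeZero.pos m) h)
    (Nat.pos_of_dvd_of_pos h (NeZero.pos m))
  simp only [mem_zmultiples_iff_mem_range_addOrderOf, addOrderOf_natCast_of_dvd h,
    Finset.mem_image, Finset.mem_range, nsmul_eq_mul, Nat.cast_mul, Nat.le_sub_one_iff_lt hpos,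
    eq_comm (a := a)]

end Multiples

section LeeWeight

variable {m c : ℕ} [NeZero m]

theorem leeWt_eq_natAbs_valMinAbs (a : ZMod m) : leeWt m a = a.valMinAbs.natAbs :=
  (ZMod.valMinAbs_natAbs_eq_min a).symm

theorem leeWt_le_half (a : ZMod m) : leeWt m a ≤ m / 2 :=
  (leeWt_eq_natAbs_valMinAbs a).trans_le a.natAbs_valMinAbs_le

theorem leeWt_intCast_le (z : ℤ) : leeWt m (z : ZMod m) ≤ z.natAbs := by
  rw [leeWt_eq_natAbs_valMinAbs]
  exact ZMod.natAbs_min_of_le_div_two m _ z (ZMod.coe_valMinAbs _) (ZMod.natAbs_valMinAbs_le _)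

theorem leeWt_le_iff_eq_valMinAbs_castHom (h : 2 * c + 1 ∣ m) (a : ZMod m) :
    leeWt m a ≤ c ↔ a = ((ZMod.castHom h (ZMod (2 * c + 1)) a).valMinAbs : ZMod m) := by
  constructor
  · intro ha
    rw [leeWt_eq_natAbs_valMinAbs] at ha
    have hres : (ZMod.castHom h (ZMod (2 * c + 1)) a).valMinAbs = a.valMinAbs := by
      refine (ZMod.valMinAbs_spec _ _).2 ⟨?_, by rw [Set.mem_Ioc]; omega⟩
      rw [← map_intCast (ZMod.castHom h (ZMod (2 * c + 1))), ZMod.coe_valMinAbs]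
    rw [hres, ZMod.coe_valMinAbs]
  · intro ha
    have hr := (ZMod.castHom h (ZMod (2 * c + 1)) a).natAbs_valMinAbs_le
    rw [ha]
    exact (leeWt_intCast_le _).trans (by omega)

theorem existsUnique_mem_zmultiples_leeWt_sub_le (h : 2 * c + 1 ∣ m) (v : ZMod m) :
    ∃! x, x ∈ AddSubgroup.zmultiples ((2 * c + 1 : ℕ) : ZMod m) ∧ leeWt m (x - v) ≤ c := by
  simp only [mem_zmultiples_natCast_iff_castHom_eq_zero h, leeWt_le_iff_eq_valMinAbs_castHom h,
    map_sub]
  set r := ZMod.castHom h (ZMod (2 * c + 1))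
  refine ⟨v + ((0 - r v).valMinAbs : ZMod m), ?_, ?_⟩
  · have hker : r (v + ((0 - r v).valMinAbs : ZMod m)) = 0 := by
      rw [map_add, map_intCast, ZMod.coe_valMinAbs, zero_sub, add_neg_cancel]
    exact ⟨hker, by rw [hker, add_sub_cancel_left]⟩
  · rintro x ⟨hx, hxv⟩
    rw [← hx, ← hxv, add_sub_cancel]

end LeeWeight

/-- The standard centers of a tiling of `ZMod m` by Lee balls of radius `c`, meant for `c = m / 2`
and for `2 * c + 1 ∣ m`. The value `c = 0` is not singled out, because the multiples of `2 * 0 + 1`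
are all of `ZMod m`. -/
def perfectLeeCode (m c : ℕ) : AddSubgroup (ZMod m) :=
  if c = m / 2 then ⊥ else AddSubgroup.zmultiples ((2 * c + 1 : ℕ) : ZMod m)

section PerfectLeeCode

variable {m c : ℕ}

theorem perfectLeeCode_half : perfectLeeCode m (m / 2) = ⊥ :=
  if_pos rfl

theorem perfectLeeCode_of_lt (hc : c < m / 2) :
    perfectLeeCode m c = AddSubgroup.zmultiples ((2 * c + 1 : ℕ) : ZMod m) :=
  if_neg hc.ne

variable [NeZero m]

theorem mem_perfectLeeCode_iff (hc : c ≤ m / 2) (hd : c < m / 2 → 2 * c + 1 ∣ m) (x : ZMod m) :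
    x ∈ perfectLeeCode m c ↔ (c = m / 2 → x = 0) ∧ (0 < c → c < m / 2 →
      ∃ j ≤ m / (2 * c + 1) - 1, x = ((j * (2 * c + 1) : ℕ) : ZMod m)) := by
  rcases hc.eq_or_lt with rfl | hlt
  · simp [perfectLeeCode_half]
  rw [perfectLeeCode_of_lt hlt]
  rcases c.eq_zero_or_pos with rfl | hpos
  · have htop : x ∈ AddSubgroup.zmultiples ((2 * 0 + 1 : ℕ) : ZMod m) :=
      (mem_zmultiples_natCast_iff_castHom_eq_zero (hd hlt) x).2
        (Subsingleton.elim (α := ZMod 1) _ _)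
    simp only [htop, hlt.ne, lt_irrefl, false_imp_iff, and_self]
  · simp only [mem_zmultiples_natCast_iff_exists_le (hd hlt), hpos, hlt, hlt.ne, false_imp_iff,
      true_imp_iff, true_and]

theorem existsUnique_mem_perfectLeeCode (hc : c ≤ m / 2) (hd : c < m / 2 → 2 * c + 1 ∣ m)
    (v : ZMod m) : ∃! x, x ∈ perfectLeeCode m c ∧ leeWt m (x - v) ≤ c := by
  rcases hc.eq_or_lt with rfl | hlt
  · simp [perfectLeeCode_half, leeWt_le_half]
  · rw [perfectLeeCode_of_lt hlt]
    exact existsUnique_mem_zmultiples_leeWt_sub_le (hd hlt) v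

theorem card_perfectLeeCode (hc : c ≤ m / 2) (hd : c < m / 2 → 2 * c + 1 ∣ m) :
    Nat.card (perfectLeeCode m c) =
      (if 0 < c ∧ c < m / 2 then m / (2 * c + 1) else 1) * (if c = 0 then m else 1) := by
  rcases hc.eq_or_lt with rfl | hlt
  · have hm : m / 2 = 0 → m = 1 := by have := NeZero.pos m; omega
    simpa [perfectLeeCode_half, eq_comm] using hm
  · rw [perfectLeeCode_of_lt hlt, Nat.card_zmultiples, addOrderOf_natCast_of_dvd (hd hlt)]
    rcases c.eq_zero_or_pos with rfl | hpos
    · simp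
    · simp [hpos, hpos.ne', hlt]

end PerfectLeeCode

/-- The product code of the coordinate codes `C i`: the block vectors all of whose coordinates in
block `i` lie in `C i`. -/
def blockCode {s : ℕ} {α : Type*} (π : Fin s → ℕ) (C : Fin s → Set α) :
    Set (∀ i : Fin s, Fin (π i) → α) :=
  {v | ∀ i t, v i t ∈ C i}

section BlockCode

variable {m s : ℕ} {π : Fin s → ℕ}

theorem card_blockCode {α : Type*} (C : Fin s → Set α) :
    Nat.card (blockCode π C) = ∏ i, Nat.card (C i) ^ π i := by
  let e : blockCode π C ≃ ∀ i, Fin (π i) → C i :=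
    Equiv.subtypePiEquivPi.trans (Equiv.piCongrRight fun _ => Equiv.subtypePiEquivPi)
  simp only [Nat.card_congr e, Nat.card_pi, Finset.prod_const, Finset.card_univ, Fintype.card_fin]

theorem mem_ballI_iff {I : Fin s → ℕ} {u v : ∀ i : Fin s, Fin (π i) → ZMod m} :
    v ∈ ballI m s π I u ↔ ∀ i t, leeWt m (u i t - v i t) ≤ I i := by
  simp [ballI, blockWt]

theorem iPerfect_blockCode {I : Fin s → ℕ} {C : Fin s → Set (ZMod m)}
    (hC : ∀ i v, ∃! x, x ∈ C i ∧ leeWt m (x - v) ≤ I i) :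
    IPerfect m s π I (blockCode π C) := by
  constructor
  · intro x hx y hy hxy
    refine Set.disjoint_left.2 fun v hvx hvy => hxy ?_
    rw [mem_ballI_iff] at hvx hvy
    ext i t
    exact (hC i (v i t)).unique ⟨hx i t, hvx i t⟩ ⟨hy i t, hvy i t⟩
  · refine Set.eq_univ_of_forall fun v => ?_
    choose x hxC hxv using fun i t => (hC i (v i t)).exists
    exact Set.mem_biUnion (show x ∈ blockCode π C from hxC) (mem_ballI_iff.2 hxv)

theorem card_blockCode_perfectLeeCode [NeZero m] {I : Fin s → ℕ} (hI : ∀ i, I i ≤ m / 2)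
    (hdvd : ∀ i, I i < m / 2 → 2 * I i + 1 ∣ m) :
    Nat.card (blockCode π fun i => (perfectLeeCode m (I i) : Set (ZMod m))) =
      (∏ i with 0 < I i ∧ I i < m / 2, (m / (2 * I i + 1)) ^ π i) *
        m ^ (∑ i with I i = 0, π i) := by
  simp only [card_blockCode, SetLike.coe_sort_coe, card_perfectLeeCode (hI _) (hdvd _), mul_pow,
    ite_pow, one_pow, Finset.prod_mul_distrib, ← Finset.prod_filter, Finset.prod_pow_eq_pow_sum]

end BlockCode

theorem I_balls_centered_at_D_partition_general
    (m s : ℕ) [NeZero m] (π I : Fin s → ℕ) (hI : ∀ i, I i ≤ m / 2)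
    (hdvd : ∀ j, 0 < I j → I j < m / 2 → (2 * I j + 1) ∣ m) :
    let D : Set (∀ i : Fin s, Fin (π i) → ZMod m) :=
      {v | (∀ i, I i = m / 2 → v i = 0) ∧
        (∀ i, 0 < I i → I i < m / 2 → ∀ t : Fin (π i), ∃ j : ℕ,
          j ≤ m / (2 * I i + 1) - 1 ∧ v i t = ((j * (2 * I i + 1) : ℕ) : ZMod m))}
    IPerfect m s π I D ∧
    Nat.card ↥D =
      (∏ i ∈ Finset.univ.filter (fun i => 0 < I i ∧ I i < m / 2),
        (m / (2 * I i + 1)) ^ π i) *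
      m ^ (∑ i ∈ Finset.univ.filter (fun i => I i = 0), π i) := by
  intro D
  have hdvd' (i : Fin s) (hlt : I i < m / 2) : 2 * I i + 1 ∣ m := by
    rcases (I i).eq_zero_or_pos with h0 | hpos
    · simp [h0]
    · exact hdvd i hpos hlt
  have hD : D = blockCode π fun i => (perfectLeeCode m (I i) : Set (ZMod m)) := by
    have hmem (i : Fin s) := mem_perfectLeeCode_iff (hI i) (hdvd' i)
    ext v
    constructor
    · intro hv i t
      exact (hmem i _).2 ⟨fun hfull => congrFun (hv.1 i hfull) t,
        fun hpos hlt => hv.2 i hpos hlt t⟩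
    · intro hv
      exact ⟨fun i hfull => funext fun t => ((hmem i _).1 (hv i t)).1 hfull,
        fun i hpos hlt t => ((hmem i _).1 (hv i t)).2 hpos hlt⟩
  rw [hD]
  exact ⟨iPerfect_blockCode fun i => existsUnique_mem_perfectLeeCode (hI i) (hdvd' i),
    card_blockCode_perfectLeeCode hI hdvd'⟩

/-- for an ideal `I` with `2I(j)+1 ∣ m` for every `j ∈ I_p`, the
`I`-balls centered at the elements of `D` partition `ℤ_m^n`, and `|D|` is as stated. -/
theorem I_balls_centered_at_D_partition
    (m s : ℕ) (hm : 4 ≤ m) (hs : 1 ≤ s)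
    (P : PartialOrder (Fin s)) (π : Fin s → ℕ) (hπ : ∀ i, 0 < π i)
    (n : ℕ) (hn : n = ∑ i, π i)
    (I : Fin s → ℕ) (hI : IsIdeal m s P I)
    (hdvd : ∀ j, 0 < I j → I j < m / 2 → (2 * I j + 1) ∣ m) :
    let D : Set (∀ i : Fin s, Fin (π i) → ZMod m) :=
      {v | (∀ i, I i = m / 2 → v i = 0) ∧
        (∀ i, 0 < I i → I i < m / 2 → ∀ t : Fin (π i), ∃ j : ℕ,
          j ≤ m / (2 * I i + 1) - 1 ∧ v i t = ((j * (2 * I i + 1) : ℕ) : ZMod m))}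
    (D.Pairwise fun x y => Disjoint (ballI m s π I x) (ballI m s π I y)) ∧
    (⋃ x ∈ D, ballI m s π I x) = Set.univ ∧
    Nat.card ↥D =
      (∏ i ∈ Finset.univ.filter (fun i => 0 < I i ∧ I i < m / 2),
        (m / (2 * I i + 1)) ^ π i) *
      m ^ (∑ i ∈ Finset.univ.filter (fun i => I i = 0), π i) := by
  have : NeZero m := ⟨by omega⟩
  exact and_assoc.1 (I_balls_centered_at_D_partition_general m s π I hI.1 hdvd)

end
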